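/- For every k ≥ 1, every selection (S_1, ..., S_k) of level k, every positive multiple m' of p_{k+1}, and every residue class y modulo p_{k+1}, the number of integers n with 1 ≤ n ≤ m' · m_k such that n is permitted for the selection and n ≡ y (mod p_{k+1}) equals (m'/p_{k+1}) · c_k, where c_k = (p_1 − 1)(p_2 − 2)⋯(p_k − 2). -/

import Mathlib

/-- The `h`-th prime number (1-indexed): `nthPrime 1 = 2`, `nthPrime 2 = 3`, ... -/
noncomputable def nthPrime (h : ℕ) : ℕ := Nat.nth Nat.Prime (h - 1)

/-- `mK k = p_1 * p_2 * ⋯ * p_k`, the product of the first `k` primes. -/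
noncomputable def mK (k : ℕ) : ℕ := ∏ h ∈ Finset.Icc 1 k, nthPrime h

/-- `cK k = (p_1 - 1) * (p_2 - 2) * ⋯ * (p_k - 2)`. -/
noncomputable def cK (k : ℕ) : ℕ := (nthPrime 1 - 1) * ∏ h ∈ Finset.Icc 2 k, (nthPrime h - 2)

/-- A selection of level `k`: a family of sets of residues `S h ⊆ {0, …, p_h - 1}`
with `|S 1| = 1` and `|S h| = 2` for `2 ≤ h ≤ k`. -/
def IsSelection (k : ℕ) (S : ℕ → Finset ℕ) : Prop :=
  (∀ h, 1 ≤ h → h ≤ k → S h ⊆ Finset.range (nthPrime h)) ∧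
    (S 1).card = 1 ∧ ∀ h, 2 ≤ h → h ≤ k → (S h).card = 2

/-- `n` is permitted for a selection of level `k` if for every `1 ≤ h ≤ k` the residue of
`n` modulo `p_h` is not a selected remainder. -/
def Permitted (k : ℕ) (S : ℕ → Finset ℕ) (n : ℕ) : Prop :=
  ∀ h ∈ Finset.Icc 1 k, n % nthPrime h ∉ S h

noncomputable instance (k : ℕ) (S : ℕ → Finset ℕ) : DecidablePred (Permitted k S) := fun n =>
  inferInstanceAs (Decidable (∀ h ∈ Finset.Icc 1 k, n % nthPrime h ∉ S h))

/-- The density `δ_k = c_k · p_k / m_k` of permitted `k`-tuples within a period. -/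
noncomputable def deltaK (k : ℕ) : ℝ := (cK k : ℝ) * nthPrime k / mK k

theorem aux_count_mul (a b : ℕ) (hab : Nat.Coprime a b) (ha : 0 < a) (hb : 0 < b)
    (P Q : ℕ → Prop) [DecidablePred P] [DecidablePred Q]
    (hP : ∀ n, P (n % a) ↔ P n) (hQ : ∀ n, Q (n % b) ↔ Q n) :
    Nat.count (fun n => P n ∧ Q n) (a * b) = Nat.count P a * Nat.count Q b := by
  rw [Nat.count_eq_card_filter_range, Nat.count_eq_card_filter_range,
    Nat.count_eq_card_filter_range, ← Finset.card_product]
  refine Finset.card_bij (fun n _ => (n % a, n % b)) ?_ ?_ ?_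
  · intro n hn
    simp only [Finset.mem_filter, Finset.mem_range] at hn
    simp only [Finset.mem_product, Finset.mem_filter, Finset.mem_range]
    exact ⟨⟨Nat.mod_lt _ ha, (hP n).2 hn.2.1⟩, ⟨Nat.mod_lt _ hb, (hQ n).2 hn.2.2⟩⟩
  · intro n hn m hm h
    simp only [Finset.mem_filter, Finset.mem_range] at hn hm
    simp only [Prod.mk.injEq] at h
    have h3 : n ≡ m [MOD a * b] := (Nat.modEq_and_modEq_iff_modEq_mul hab).1 ⟨h.1, h.2⟩
    exact h3.eq_of_lt_of_lt hn.1 hm.1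
  · rintro ⟨u, v⟩ huv
    simp only [Finset.mem_product, Finset.mem_filter, Finset.mem_range] at huv
    obtain ⟨⟨hu, hPu⟩, hv, hQv⟩ := huv
    let c := Nat.chineseRemainder hab u v
    have h1 : (c : ℕ) % a = u := by
      have := c.2.1
      rw [Nat.ModEq, Nat.mod_eq_of_lt hu] at this
      exact this
    have h2 : (c : ℕ) % b = v := by
      have := c.2.2
      rw [Nat.ModEq, Nat.mod_eq_of_lt hv] at this
      exact this
    refine ⟨c, ?_, by rw [h1, h2]⟩
    simp only [Finset.mem_filter, Finset.mem_range]
    refine ⟨Nat.chineseRemainder_lt_mul hab u v ha.ne' hb.ne', ?_, ?_⟩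
    · rw [← hP, h1]; exact hPu
    · rw [← hQ, h2]; exact hQv

theorem aux_count_periods (N t : ℕ) (P : ℕ → Prop) [DecidablePred P]
    (hP : ∀ n, P (n % N) ↔ P n) : Nat.count P (t * N) = t * Nat.count P N := by
  induction t with
  | zero => simp
  | succ t ih =>
    rw [Nat.succ_mul, Nat.count_add, ih, Nat.succ_mul]
    congr 1
    have : (fun k => P (t * N + k)) = P := by
      funext k
      rw [eq_iff_iff, ← hP, Nat.mul_add_mod_self_right, hP]
    simp only [this]

theorem aux_prime (h : ℕ) : (nthPrime h).Prime := Nat.prime_nth_prime _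

theorem aux_coprime (k : ℕ) : Nat.Coprime (mK k) (nthPrime (k + 1)) := by
  unfold mK
  refine Nat.Coprime.prod_left fun h hh => ?_
  rw [Finset.mem_Icc] at hh
  refine (Nat.coprime_primes (aux_prime _) (aux_prime _)).2 fun he => ?_
  have := Nat.nth_injective Nat.infinite_setOfPred_prime he
  omega

theorem aux_mK_succ (k : ℕ) : mK (k + 1) = mK k * nthPrime (k + 1) := by
  unfold mK
  rw [Finset.prod_Icc_succ_top (by omega)]

theorem aux_mK_pos (k : ℕ) : 0 < mK k :=
  Finset.prod_pos fun h _ => (aux_prime h).pos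

theorem aux_permitted_mod (k : ℕ) (S : ℕ → Finset ℕ) (n : ℕ) :
    Permitted k S (n % mK k) ↔ Permitted k S n := by
  unfold Permitted
  refine forall₂_congr fun h hh => ?_
  have hd : nthPrime h ∣ mK k := Finset.dvd_prod_of_mem nthPrime hh
  rw [Nat.mod_mod_of_dvd _ hd]

theorem aux_count_prime (p : ℕ) (T : Finset ℕ) (hT : T ⊆ Finset.range p) :
    Nat.count (fun n => n % p ∉ T) p = p - T.card := by
  rw [Nat.count_eq_card_filter_range]
  have : (Finset.range p).filter (fun n => n % p ∉ T) = Finset.range p \ T := by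
    ext n
    simp only [Finset.mem_filter, Finset.mem_sdiff, Finset.mem_range]
    refine and_congr_right fun h => ?_
    rw [Nat.mod_eq_of_lt h]
  rw [this, Finset.card_sdiff_of_subset hT, Finset.card_range]

theorem aux_count_permitted (S : ℕ → Finset ℕ) (k : ℕ)
    (hS : ∀ h, 1 ≤ h → h ≤ k → S h ⊆ Finset.range (nthPrime h)) :
    Nat.count (Permitted k S) (mK k) = ∏ h ∈ Finset.Icc 1 k, (nthPrime h - (S h).card) := by
  induction k with
  | zero =>
    have h0 : Permitted 0 S 0 := by simp [Permitted]
    have h1 : mK 0 = 0 + 1 := by simp [mK]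
    rw [h1, Nat.count_succ, if_pos h0]
    simp
  | succ k ih =>
    rw [Finset.prod_Icc_succ_top (by omega), ← ih fun h h1 h2 => hS h h1 (by omega),
      ← aux_count_prime _ _ (hS (k + 1) (by omega) le_rfl), aux_mK_succ,
      ← aux_count_mul _ _ (aux_coprime k) (aux_mK_pos k) (aux_prime _).pos _ _
        (aux_permitted_mod k S) (fun n => by rw [Nat.mod_mod])]
    rw [Nat.count_eq_card_filter_range, Nat.count_eq_card_filter_range]
    congr 1
    refine Finset.filter_congr fun n _ => ?_
    unfold Permitted
    rw [← Finset.insert_Icc_right_eq_Icc_add_one (by omega), Finset.forall_mem_insert, and_comm]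

/-- For `m'` a positive multiple of `p_{k+1}`, the permitted integers in `m'` periods of
`S_k` are uniformly distributed over the residue classes modulo `p_{k+1}`: for every residue
`y`, the number of permitted `n ∈ [1, m' · m_k]` with `n ≡ y (mod p_{k+1})` equals
`(m'/p_{k+1}) · c_k`. -/
theorem permitted_uniform_distribution_multiple (k : ℕ) (hk : 1 ≤ k) (S : ℕ → Finset ℕ)
    (hS : IsSelection k S) (m' : ℕ) (hm' : 0 < m') (hdvd : nthPrime (k + 1) ∣ m')
    (y : ℕ) (hy : y < nthPrime (k + 1)) :
    ((Finset.Icc 1 (m' * mK k)).filter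
      (fun n => Permitted k S n ∧ n % nthPrime (k + 1) = y)).card
      = (m' / nthPrime (k + 1)) * cK k := by
  obtain ⟨t, rfl⟩ := hdvd
  rw [Nat.mul_div_cancel_left _ (aux_prime _).pos]
  have hc : Nat.count (Permitted k S) (mK k) = cK k := by
    rw [aux_count_permitted S k hS.1, ← Finset.mul_prod_Ioc_eq_prod_Icc hk, hS.2.1]
    unfold cK
    congr 1
    refine Finset.prod_congr (by ext; simp [Finset.mem_Ioc, Finset.mem_Icc]; omega) fun h hh => ?_
    rw [Finset.mem_Icc] at hh
    rw [hS.2.2 h hh.1 hh.2]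
  have h1 : Nat.count (fun n => n % nthPrime (k + 1) = y) (nthPrime (k + 1)) = 1 := by
    rw [Nat.count_eq_card_filter_range, Finset.card_eq_one]
    refine ⟨y, ?_⟩
    ext n
    simp only [Finset.mem_filter, Finset.mem_range, Finset.mem_singleton]
    constructor
    · rintro ⟨h, h'⟩
      rwa [Nat.mod_eq_of_lt h] at h'
    · rintro rfl
      exact ⟨hy, Nat.mod_eq_of_lt hy⟩
  have hper : ∀ n, (Permitted k S (n % (mK k * nthPrime (k + 1))) ∧
      n % (mK k * nthPrime (k + 1)) % nthPrime (k + 1) = y) ↔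
      (Permitted k S n ∧ n % nthPrime (k + 1) = y) := by
    intro n
    rw [Nat.mod_mod_of_dvd _ (Dvd.intro_left _ rfl), ← aux_permitted_mod,
      Nat.mod_mod_of_dvd _ (Dvd.intro _ rfl), aux_permitted_mod]
  have hN := aux_count_mul _ _ (aux_coprime k) (aux_mK_pos k) (aux_prime _).pos
    (Permitted k S) (fun n => n % nthPrime (k + 1) = y)
    (aux_permitted_mod k S) (fun n => by rw [Nat.mod_mod])
  rw [h1, hc, mul_one] at hN
  have hT := aux_count_periods (mK k * nthPrime (k + 1)) t
    (fun n => Permitted k S n ∧ n % nthPrime (k + 1) = y) hper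
  rw [hN] at hT
  have he : nthPrime (k + 1) * t * mK k = t * (mK k * nthPrime (k + 1)) := by ring
  rw [← hT, he, ← Nat.filter_Ico_card_eq_of_periodic 1]
  · congr 2
    ext n
    simp only [Finset.mem_Icc, Finset.mem_Ico]
    omega
  · intro n
    apply propext
    beta_reduce
    rw [← hper, Nat.add_mul_mod_self_right, hper]
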